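/- If N_15^{aa}(Π) = 19, then in the arrangement π_{a_10} of Π immediately after the swap in which a_10 enters the 13-center, the elements occupying positions 11 and 20 are a_1 and a_2 (in one of the two possible orders). -/

import Mathlib

/-- An `n`-half-period: a sequence `π_0, …, π_{n(n-1)/2}` of arrangements of `n`
labeled elements in the positions `1, …, n` (recorded by `pos t x` = the position of
element `x` at time `t`), in which consecutive arrangements differ by a transposition
of the elements in two adjacent positions, and the last arrangement is the reverse of
the first. -/
structure HalfPeriod (n : ℕ) where
  pos : ℕ → Fin n → ℕ
  pos_mem : ∀ t, t ≤ n * (n - 1) / 2 → ∀ x, 1 ≤ pos t x ∧ pos t x ≤ n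
  pos_inj : ∀ t, t ≤ n * (n - 1) / 2 → Function.Injective (pos t)
  step : ∀ t, t < n * (n - 1) / 2 → ∃ x y : Fin n,
    pos t y = pos t x + 1 ∧ pos (t + 1) x = pos t x + 1 ∧ pos (t + 1) y = pos t x ∧
    ∀ z, z ≠ x → z ≠ y → pos (t + 1) z = pos t z
  reverse : ∀ x, pos (n * (n - 1) / 2) x = n + 1 - pos 0 x

namespace HalfPeriod

variable {n : ℕ}

/-- The number of transposition steps of an `n`-half-period. -/
def steps (n : ℕ) : ℕ := n * (n - 1) / 2

/-- Element `x` moves (changes position) at step `t`. -/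
def Moved (hp : HalfPeriod n) (t : ℕ) (x : Fin n) : Prop :=
  hp.pos (t + 1) x ≠ hp.pos t x

/-- Step `t` is the transposition of the (distinct) elements `x` and `y`. -/
def SwapsAt (hp : HalfPeriod n) (t : ℕ) (x y : Fin n) : Prop :=
  x ≠ y ∧ hp.Moved t x ∧ hp.Moved t y

/-- Step `t` is an `i`-transposition: it swaps the elements at positions `i` and `i+1`. -/
def GateAt (hp : HalfPeriod n) (t i : ℕ) : Prop :=
  ∃ x y : Fin n, hp.pos t x = i ∧ hp.pos t y = i + 1 ∧
    hp.pos (t + 1) x = i + 1 ∧ hp.pos (t + 1) y = i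

/-- Step `t` is an `i`-critical transposition: an `i`- or an `(n-i)`-transposition. -/
def Critical (hp : HalfPeriod n) (t i : ℕ) : Prop :=
  hp.GateAt t i ∨ hp.GateAt t (n - i)

/-- Step `t` is a `(≤ k)`-critical transposition. -/
def LeCritical (hp : HalfPeriod n) (t k : ℕ) : Prop :=
  ∃ i, 1 ≤ i ∧ i ≤ k ∧ hp.Critical t i

/-- `N_{≤ k}`: the number of `(≤ k)`-critical transpositions of the half-period. -/
noncomputable def NLe (hp : HalfPeriod n) (k : ℕ) : ℕ :=
  {t : ℕ | t < steps n ∧ hp.LeCritical t k}.ncard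

end HalfPeriod
/-- `hp` is a 3-decomposable `30`-half-period, witnessed by the labeling
`A = {a 0, …, a 9}`, `B = {b 0, …, b 9}`, `C = {c 0, …, c 9}` (the element with
1-indexed subscript `j` is `a (j-1)`, etc.): the initial arrangement is
`(a_10, a_9, …, a_1, b_1, …, b_10, c_1, …, c_10)`, every transposition between `A`
and `B` occurs before every transposition between `C` and `A ∪ B`, and every
transposition between `A` and `C` occurs before every transposition between `B`
and `C`. -/
def IsThreeDecompLabeling30 (hp : HalfPeriod 30) (a b c : Fin 10 → Fin 30) : Prop :=
  Function.Injective (Sum.elim a (Sum.elim b c)) ∧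
  (∀ i : Fin 10, hp.pos 0 (a i) = 10 - (i : ℕ)) ∧
  (∀ i : Fin 10, hp.pos 0 (b i) = 11 + (i : ℕ)) ∧
  (∀ i : Fin 10, hp.pos 0 (c i) = 21 + (i : ℕ)) ∧
  (∀ s t, s < HalfPeriod.steps 30 → t < HalfPeriod.steps 30 →
    (∃ i j, hp.SwapsAt s (a i) (b j)) →
    (∃ i x, ((∃ j, x = a j) ∨ (∃ j, x = b j)) ∧ hp.SwapsAt t (c i) x) → s < t) ∧
  (∀ s t, s < HalfPeriod.steps 30 → t < HalfPeriod.steps 30 →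
    (∃ i j, hp.SwapsAt s (a i) (c j)) →
    (∃ i j, hp.SwapsAt t (b i) (c j)) → s < t)

/-- `x` and `y` belong to the same one of the three classes `A`, `B`, `C`. -/
def SameClass (a b c : Fin 10 → Fin 30) (x y : Fin 30) : Prop :=
  (∃ i j, x = a i ∧ y = a j) ∨ (∃ i j, x = b i ∧ y = b j) ∨ (∃ i j, x = c i ∧ y = c j)
/-- Position `p` lies in the `k`-center (positions `k+1, …, 30-k`) of a `30`-half-period. -/
def InCenter (k p : ℕ) : Prop := k + 1 ≤ p ∧ p ≤ 30 - k

/-- Step `t` is the (first) swap in which element `x` enters the `k`-center. -/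
def EntersCenterAt (hp : HalfPeriod 30) (k : ℕ) (x : Fin 30) (t : ℕ) : Prop :=
  t < HalfPeriod.steps 30 ∧ InCenter k (hp.pos (t + 1) x) ∧ ¬ InCenter k (hp.pos t x) ∧
    ∀ s < t, ¬ (InCenter k (hp.pos (s + 1) x) ∧ ¬ InCenter k (hp.pos s x))

/-- Step `t` is the (last) swap in which element `x` leaves the `k`-center. -/
def LeavesCenterAt (hp : HalfPeriod 30) (k : ℕ) (x : Fin 30) (t : ℕ) : Prop :=
  t < HalfPeriod.steps 30 ∧ InCenter k (hp.pos t x) ∧ ¬ InCenter k (hp.pos (t + 1) x) ∧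
    ∀ s, t < s → s < HalfPeriod.steps 30 →
      ¬ (InCenter k (hp.pos s x) ∧ ¬ InCenter k (hp.pos (s + 1) x))
/-- `hal(x_{j+1})`: the number of indices `i < j` such that the transposition between
`x j` and `x i` occurs in the 15th gate (swaps positions `15` and `16`). -/
noncomputable def halOf (hp : HalfPeriod 30) (x : Fin 10 → Fin 30) (j : Fin 10) : ℕ :=
  {i : Fin 10 | i < j ∧ ∃ t, t < HalfPeriod.steps 30 ∧ hp.GateAt t 15 ∧
    hp.SwapsAt t (x j) (x i)}.ncard

/-- `N_15^{xx}`: the number of 15-transpositions between two elements of the class `x`. -/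
noncomputable def N15Mono (hp : HalfPeriod 30) (x : Fin 10 → Fin 30) : ℕ :=
  {t : ℕ | t < HalfPeriod.steps 30 ∧ hp.GateAt t 15 ∧ ∃ i j, hp.SwapsAt t (x i) (x j)}.ncard

/-!
In a 3-decomposable half-period each class is, at some time, in front of the other two, and in the
circular sequence read from that time its bichromatic swaps only move it towards the other end. So
the balance of the gates an element crosses determines its number of critical bichromatic swaps up
to its critical monochromatic ones. Summed over all elements, the assumption for `k = 10` leaves no
`(≤ 10)`-critical monochromatic swap, and the assumption for `k = 13` makes tight the bound that
forces the elements near the front of their class to advance in critical swaps: the four leading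
elements of each class then never retreat in one. For `A` this means that its elements are moved
down by each other only through the gates `11, …, 19`, and `a_10, …, a_7` only through the gates
`14, …, 16`.

Consequently, when `a_10` reaches position 14, `A` occupies the positions `11, …, 20`, with
`a_10, …, a_7` at `14, …, 17`. An element at position `p` of this block has at most
`min (p - 10) (21 - p)` swaps through gate 15 in which it rises past a member of `A`, and `a_1` and
`a_2` have even fewer as nearly all of `A` starts below them; the resulting total reaches 19 only
if `a_1` and `a_2` are at the two ends of the block.
-/

open Finset in
theorem card_filter_lt_of_injOn {α β : Type*} [LinearOrder β] {f : α → β} {s : Finset α}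
    (hf : Set.InjOn f s) : #{q ∈ s ×ˢ s | f q.1 < f q.2} = (#s).choose 2 := by
  classical
  have hswap : #{q ∈ s ×ˢ s | f q.2 < f q.1} = #{q ∈ s ×ˢ s | f q.1 < f q.2} :=
    card_bij' (fun q _ ↦ q.swap) (fun q _ ↦ q.swap) (by simp +contextual) (by simp +contextual)
      (by simp) (by simp)
  have hsplit : ({q ∈ s ×ˢ s | f q.1 < f q.2} : Finset _) ∪ {q ∈ s ×ˢ s | f q.2 < f q.1} =
      s.offDiag := by
    ext ⟨x, y⟩
    simp only [mem_union, mem_filter, mem_product, mem_offDiag, ← and_or_left, ← ne_iff_lt_or_gt,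
      and_assoc]
    exact and_congr_right fun hx ↦ and_congr_right fun hy ↦ (hf.ne_iff hx hy)
  have hdisj : Disjoint ({q ∈ s ×ˢ s | f q.1 < f q.2} : Finset _) {q ∈ s ×ˢ s | f q.2 < f q.1} :=
    disjoint_filter.2 fun _ _ h ↦ h.not_gt
  have hcard := card_union_of_disjoint hdisj
  rw [hsplit, offDiag_card, hswap] at hcard
  rw [Nat.choose_two_right, Nat.mul_sub_one]
  omega

open Finset in
theorem sum_add_pair_le_sum_add_pair {ι : Type*} {s : Finset ι} {f g : ι → ℕ}
    (hfg : ∀ i ∈ s, f i ≤ g i) {x y : ι} (hx : x ∈ s) (hy : y ∈ s) (hxy : x ≠ y) :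
    ∑ i ∈ s, f i + (g x + g y) ≤ ∑ i ∈ s, g i + (f x + f y) := by
  classical
  have hpair : {x, y} ⊆ s := by simp [insert_subset_iff, hx, hy]
  have hrest := sum_le_sum fun i (hi : i ∈ s \ {x, y}) ↦ hfg i (mem_sdiff.1 hi).1
  rw [← sum_sdiff hpair, ← sum_sdiff hpair, sum_pair hxy, sum_pair hxy]
  omega

namespace HalfPeriod

open Finset

/-! ### Swaps -/

section Positions

variable {n : ℕ} (hp : HalfPeriod n)

theorem pos_steps (x : Fin n) : hp.pos (steps n) x = n + 1 - hp.pos 0 x := hp.reverse x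

theorem image_pos {t : ℕ} (ht : t ≤ steps n) : univ.image (hp.pos t) = Icc 1 n :=
  eq_of_subset_of_card_le (image_subset_iff.2 fun x _ ↦ mem_Icc.2 (hp.pos_mem t ht x))
    (by simp [card_image_of_injective _ (hp.pos_inj t ht)])

theorem card_filter_pos_mem {t : ℕ} (ht : t ≤ steps n) {s : Finset ℕ} (hs : s ⊆ Icc 1 n) :
    #{x | hp.pos t x ∈ s} = #s := by
  rw [← card_image_of_injective _ (hp.pos_inj t ht), ← filter_image (p := (· ∈ s)),
    hp.image_pos ht, filter_mem_eq_inter, inter_eq_right.2 hs]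

theorem card_filter_pos_zero_mem_Icc {l m : ℕ} (hl : 1 ≤ l) (hm : m ≤ n) :
    #{x | hp.pos 0 x ∈ Icc l m} = m + 1 - l := by
  rw [hp.card_filter_pos_mem (Nat.zero_le _) (Icc_subset_Icc hl hm), Nat.card_Icc]

end Positions

section Movers

variable {n : ℕ} [NeZero n] (hp : HalfPeriod n)

/-- The element that moves from position `gate t` to `gate t + 1` at step `t`
(a junk value if `t` is not a step). -/
noncomputable def riser (t : ℕ) : Fin n :=
  if ht : t < steps n then (hp.step t ht).choose else 0

/-- The element that moves from position `gate t + 1` to `gate t` at step `t`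
(a junk value if `t` is not a step). -/
noncomputable def faller (t : ℕ) : Fin n :=
  if ht : t < steps n then (hp.step t ht).choose_spec.choose else 0

/-- The `i` for which step `t` is an `i`-transposition. -/
noncomputable def gate (t : ℕ) : ℕ := hp.pos t (hp.riser t)

theorem step_riser_faller {t : ℕ} (ht : t < steps n) :
    hp.pos t (hp.faller t) = hp.gate t + 1 ∧ hp.pos (t + 1) (hp.riser t) = hp.gate t + 1 ∧
      hp.pos (t + 1) (hp.faller t) = hp.gate t ∧
      ∀ z, z ≠ hp.riser t → z ≠ hp.faller t → hp.pos (t + 1) z = hp.pos t z := by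
  simp only [gate, riser, faller, dif_pos ht]
  exact (hp.step t ht).choose_spec.choose_spec

theorem pos_faller {t : ℕ} (ht : t < steps n) : hp.pos t (hp.faller t) = hp.gate t + 1 :=
  (hp.step_riser_faller ht).1

theorem pos_succ_riser {t : ℕ} (ht : t < steps n) :
    hp.pos (t + 1) (hp.riser t) = hp.gate t + 1 :=
  (hp.step_riser_faller ht).2.1

theorem pos_succ_faller {t : ℕ} (ht : t < steps n) : hp.pos (t + 1) (hp.faller t) = hp.gate t :=
  (hp.step_riser_faller ht).2.2.1

theorem pos_succ_of_ne {t : ℕ} (ht : t < steps n) {x : Fin n} (hr : x ≠ hp.riser t)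
    (hf : x ≠ hp.faller t) : hp.pos (t + 1) x = hp.pos t x :=
  (hp.step_riser_faller ht).2.2.2 x hr hf

theorem riser_ne_faller {t : ℕ} (ht : t < steps n) : hp.riser t ≠ hp.faller t := by
  intro h
  have := hp.pos_faller ht
  rw [← h, gate] at this
  omega

theorem gate_mem_Ico {t : ℕ} (ht : t < steps n) : hp.gate t ∈ Ico 1 n := by
  have hr : 1 ≤ hp.gate t := (hp.pos_mem t ht.le (hp.riser t)).1
  have hf := (hp.pos_mem t ht.le (hp.faller t)).2
  have := hp.pos_faller ht
  exact mem_Ico.2 (by omega)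

theorem step_cases {t : ℕ} (ht : t < steps n) (x : Fin n) :
    (x = hp.riser t ∧ hp.pos t x = hp.gate t ∧ hp.pos (t + 1) x = hp.gate t + 1) ∨
    (x = hp.faller t ∧ hp.pos t x = hp.gate t + 1 ∧ hp.pos (t + 1) x = hp.gate t) ∨
    (x ≠ hp.riser t ∧ x ≠ hp.faller t ∧ hp.pos (t + 1) x = hp.pos t x) := by
  by_cases hr : x = hp.riser t
  · subst hr
    exact .inl ⟨rfl, rfl, hp.pos_succ_riser ht⟩
  by_cases hf : x = hp.faller t
  · subst hf
    exact .inr (.inl ⟨rfl, hp.pos_faller ht, hp.pos_succ_faller ht⟩)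
  · exact .inr (.inr ⟨hr, hf, hp.pos_succ_of_ne ht hr hf⟩)

theorem gateAt_iff {t : ℕ} (ht : t < steps n) {i : ℕ} : hp.GateAt t i ↔ hp.gate t = i := by
  constructor
  · rintro ⟨x, y, hx, -, hx', -⟩
    rcases hp.step_cases ht x with h | h | h <;> omega
  · rintro rfl
    exact ⟨hp.riser t, hp.faller t, rfl, hp.pos_faller ht, hp.pos_succ_riser ht,
      hp.pos_succ_faller ht⟩

theorem moved_iff {t : ℕ} (ht : t < steps n) {x : Fin n} :
    hp.Moved t x ↔ x = hp.riser t ∨ x = hp.faller t := by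
  rw [Moved]
  rcases hp.step_cases ht x with ⟨hx, h, h'⟩ | ⟨hx, h, h'⟩ | ⟨hr, hf, h⟩
  · exact iff_of_true (by omega) (.inl hx)
  · exact iff_of_true (by omega) (.inr hx)
  · simp [hr, hf, h]

theorem swapsAt_iff {t : ℕ} (ht : t < steps n) {x y : Fin n} :
    hp.SwapsAt t x y ↔
      x = hp.riser t ∧ y = hp.faller t ∨ x = hp.faller t ∧ y = hp.riser t := by
  have hne := hp.riser_ne_faller ht
  rw [SwapsAt, hp.moved_iff ht, hp.moved_iff ht]
  grind

end Movers

section SwapOrder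

variable {n : ℕ} [NeZero n] (hp : HalfPeriod n)

theorem eq_riser_and_eq_faller {t : ℕ} (ht : t < steps n) {x y : Fin n}
    (h : hp.pos t x < hp.pos t y) (h' : hp.pos (t + 1) y < hp.pos (t + 1) x) :
    hp.riser t = x ∧ hp.faller t = y := by
  have hx : hp.pos t x = hp.gate t → x = hp.riser t := fun e ↦ hp.pos_inj t ht.le e
  have hy : hp.pos t y = hp.gate t + 1 → y = hp.faller t :=
    fun e ↦ hp.pos_inj t ht.le (e.trans (hp.pos_faller ht).symm)
  rcases hp.step_cases ht x with hx' | hx' | hx' <;>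
    rcases hp.step_cases ht y with hy' | hy' | hy' <;> grind

theorem exists_swap_of_lt_of_gt {x y : Fin n} {s e : ℕ} (hse : s ≤ e) (he : e ≤ steps n)
    (hs : hp.pos s x < hp.pos s y) (h : hp.pos e y < hp.pos e x) :
    ∃ t, s ≤ t ∧ t < e ∧ hp.riser t = x ∧ hp.faller t = y := by
  induction e, hse using Nat.le_induction with
  | base => omega
  | succ e hse ih =>
    have hne : hp.pos e x ≠ hp.pos e y := fun hxy ↦ by
      rw [hp.pos_inj e (Nat.le_of_succ_le he) hxy] at hs
      exact hs.false
    rcases hne.lt_or_gt with hlt | hgt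
    · exact ⟨e, hse, e.lt_succ_self, hp.eq_riser_and_eq_faller he hlt h⟩
    · obtain ⟨t, hst, hte, hxy⟩ := ih (Nat.le_of_succ_le he) hgt
      exact ⟨t, hst, by omega, hxy⟩

theorem exists_swap {x y : Fin n} (h : hp.pos 0 x < hp.pos 0 y) :
    ∃ t < steps n, hp.riser t = x ∧ hp.faller t = y := by
  have hrev : hp.pos (steps n) y < hp.pos (steps n) x := by
    have hy := hp.pos_mem 0 (Nat.zero_le _) y
    rw [hp.pos_steps, hp.pos_steps]
    omega
  obtain ⟨t, -, ht⟩ := hp.exists_swap_of_lt_of_gt (Nat.zero_le _) le_rfl h hrev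
  exact ⟨t, ht⟩

-- There are exactly as many steps as pairs, and every pair is swapped at some step.
theorem image_riser_faller :
    (range (steps n)).image (fun t ↦ (hp.riser t, hp.faller t)) =
        ({q | hp.pos 0 q.1 < hp.pos 0 q.2} : Finset (Fin n × Fin n)) ∧
      Set.InjOn (fun t ↦ (hp.riser t, hp.faller t)) (range (steps n)) := by
  set pairs : Finset (Fin n × Fin n) := {q | hp.pos 0 q.1 < hp.pos 0 q.2} with hpairs
  have hcard : #pairs = #(range (steps n)) := by
    rw [hpairs, ← univ_product_univ,
      card_filter_lt_of_injOn (hp.pos_inj 0 (Nat.zero_le _)).injOn, card_univ, Fintype.card_fin,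
      Nat.choose_two_right, card_range, steps]
  have hsub : pairs ⊆ (range (steps n)).image fun t ↦ (hp.riser t, hp.faller t) := by
    rintro ⟨x, y⟩ hxy
    obtain ⟨t, ht, rfl, rfl⟩ := hp.exists_swap (by simpa [hpairs] using hxy)
    exact mem_image.2 ⟨t, mem_range.2 ht, rfl⟩
  have himage := (eq_of_subset_of_card_le hsub (hcard ▸ card_image_le)).symm
  exact ⟨himage, card_image_iff.1 (by rw [himage, hcard])⟩

theorem pos_zero_riser_lt_pos_zero_faller {t : ℕ} (ht : t < steps n) :
    hp.pos 0 (hp.riser t) < hp.pos 0 (hp.faller t) := by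
  have := mem_image_of_mem (fun t ↦ (hp.riser t, hp.faller t)) (mem_range.2 ht)
  rw [hp.image_riser_faller.1] at this
  simpa using this

theorem eq_of_riser_eq_of_faller_eq {s t : ℕ} (hs : s < steps n) (ht : t < steps n)
    (hr : hp.riser s = hp.riser t) (hf : hp.faller s = hp.faller t) : s = t :=
  hp.image_riser_faller.2 (by simpa using hs) (by simpa using ht) (Prod.ext hr hf)

theorem pos_riser_lt_pos_faller {s t : ℕ} (hst : s ≤ t) (ht : t < steps n) :
    hp.pos s (hp.riser t) < hp.pos s (hp.faller t) := by
  by_contra! hle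
  have hne : hp.pos s (hp.faller t) ≠ hp.pos s (hp.riser t) :=
    (hp.pos_inj s (hst.trans ht.le)).ne (hp.riser_ne_faller ht).symm
  obtain ⟨r, -, hrs, hr, hf⟩ := hp.exists_swap_of_lt_of_gt s.zero_le (hst.trans ht.le)
    (hp.pos_zero_riser_lt_pos_zero_faller ht) (lt_of_le_of_ne hle hne)
  have := hp.eq_of_riser_eq_of_faller_eq (by omega) ht hr hf
  omega

theorem pos_faller_lt_pos_riser {s t : ℕ} (hts : t < s) (hs : s ≤ steps n) :
    hp.pos s (hp.faller t) < hp.pos s (hp.riser t) := by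
  have ht : t < steps n := by omega
  by_contra! hle
  have hne : hp.pos s (hp.riser t) ≠ hp.pos s (hp.faller t) :=
    (hp.pos_inj s hs).ne (hp.riser_ne_faller ht)
  have hafter : hp.pos (t + 1) (hp.faller t) < hp.pos (t + 1) (hp.riser t) := by
    rw [hp.pos_succ_faller ht, hp.pos_succ_riser ht]
    omega
  obtain ⟨r, -, hrs, hr, hf⟩ :=
    hp.exists_swap_of_lt_of_gt hts hs hafter (lt_of_le_of_ne hle hne)
  have horder := hp.pos_zero_riser_lt_pos_zero_faller (t := r) (by omega)
  rw [hr, hf] at horder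
  exact horder.asymm (hp.pos_zero_riser_lt_pos_zero_faller ht)

theorem card_le_card_of_partner_mem {x : Fin n} {s : Finset ℕ} {q : Finset (Fin n)}
    (h : ∀ t ∈ s, t < steps n ∧
      (hp.riser t = x ∧ hp.faller t ∈ q ∨ hp.faller t = x ∧ hp.riser t ∈ q)) : #s ≤ #q := by
  have hlt : ∀ t ∈ s, hp.pos 0 (hp.riser t) < hp.pos 0 (hp.faller t) :=
    fun t ht ↦ hp.pos_zero_riser_lt_pos_zero_faller (h t ht).1
  refine card_le_card_of_injOn (fun t ↦ if hp.riser t = x then hp.faller t else hp.riser t) ?_ ?_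
  · intro t ht
    have := h t ht
    have := hlt t ht
    grind
  · intro t ht s hs hts
    have := h t ht
    have := h s hs
    have := hlt t ht
    have := hlt s hs
    exact hp.eq_of_riser_eq_of_faller_eq (h t ht).1 (h s hs).1 (by grind) (by grind)

end SwapOrder

/-! ### Crossings of gates -/

section Crossings

variable {n : ℕ} [NeZero n] (hp : HalfPeriod n)

/-- The signed `κ`-weight of the gate crossed by `x` at step `t`: positive if `x` rises, negative
if it falls, zero if it does not move. -/
noncomputable def netCrossing (κ : ℕ → ℤ) (x : Fin n) (t : ℕ) : ℤ :=
  (if hp.riser t = x then κ (hp.gate t) else 0) - if hp.faller t = x then κ (hp.gate t) else 0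

theorem netCrossing_eq_sub {t : ℕ} (ht : t < steps n) (κ : ℕ → ℤ) (x : Fin n) :
    hp.netCrossing κ x t =
      ∑ g ∈ Ico 1 (hp.pos (t + 1) x), κ g - ∑ g ∈ Ico 1 (hp.pos t x), κ g := by
  have hne := hp.riser_ne_faller ht
  have hgate := (mem_Ico.1 (hp.gate_mem_Ico ht)).1
  rw [netCrossing]
  rcases hp.step_cases ht x with ⟨rfl, h, h'⟩ | ⟨rfl, h, h'⟩ | ⟨hr, hf, h⟩
  · simp [h, h', hne.symm, sum_Ico_succ_top hgate]
  · simp [h, h', hne, sum_Ico_succ_top hgate]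
  · simp [h, hr.symm, hf.symm]

theorem sum_netCrossing {s e : ℕ} (hse : s ≤ e) (he : e ≤ steps n) (κ : ℕ → ℤ) (x : Fin n) :
    ∑ t ∈ Ico s e, hp.netCrossing κ x t =
      ∑ g ∈ Ico 1 (hp.pos e x), κ g - ∑ g ∈ Ico 1 (hp.pos s x), κ g := by
  rw [← sum_Ico_sub (fun t ↦ ∑ g ∈ Ico 1 (hp.pos t x), κ g) hse]
  exact sum_congr rfl fun t ht ↦ hp.netCrossing_eq_sub (by have := mem_Ico.1 ht; omega) κ x

theorem card_rises_le_card_falls_add_one {s e : ℕ} (hse : s ≤ e) (he : e ≤ steps n) (g : ℕ)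
    (x : Fin n) :
    #{t ∈ Ico s e | hp.gate t = g ∧ hp.riser t = x} ≤
      #{t ∈ Ico s e | hp.gate t = g ∧ hp.faller t = x} + 1 := by
  have htele := hp.sum_netCrossing hse he (Pi.single g 1) x
  have hsum : ∑ t ∈ Ico s e, hp.netCrossing (Pi.single g 1) x t =
      (#{t ∈ Ico s e | hp.gate t = g ∧ hp.riser t = x} : ℤ) -
        #{t ∈ Ico s e | hp.gate t = g ∧ hp.faller t = x} := by
    simp only [netCrossing, sum_sub_distrib, Pi.single_apply, ← ite_and, sum_boole, and_comm]
  have hle : ∑ g' ∈ Ico 1 (hp.pos e x), (Pi.single g 1 : ℕ → ℤ) g' ≤ 1 := by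
    rw [sum_pi_single']; split <;> simp
  have hnonneg : 0 ≤ ∑ g' ∈ Ico 1 (hp.pos s x), (Pi.single g 1 : ℕ → ℤ) g' := by
    rw [sum_pi_single']; split <;> simp
  omega

end Crossings

section CriticalWeight

/-- The indicator of the gates of the `(≤ k)`-critical transpositions. -/
def critWeight (n k g : ℕ) : ℤ := if g ≤ k ∨ n - k ≤ g then 1 else 0

theorem critWeight_nonneg (n k g : ℕ) : 0 ≤ critWeight n k g := by
  rw [critWeight]; split <;> simp

theorem critWeight_le_one (n k g : ℕ) : critWeight n k g ≤ 1 := by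
  rw [critWeight]; split <;> simp

theorem critWeight_eq_one_iff {n k g : ℕ} : critWeight n k g = 1 ↔ g ≤ k ∨ n - k ≤ g := by
  rw [critWeight]; split <;> simp_all

theorem sum_Ico_critWeight_of_le {n k p : ℕ} (hp : 1 ≤ p) (hpk : p ≤ k + 1) :
    ∑ g ∈ Ico 1 p, critWeight n k g = p - 1 := by
  rw [sum_congr rfl fun g hg ↦ critWeight_eq_one_iff.2 (.inl (by have := mem_Ico.1 hg; omega))]
  simp [Nat.cast_sub hp]

theorem sum_Ico_critWeight {n k : ℕ} (hkn : 2 * k < n) :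
    ∑ g ∈ Ico 1 n, critWeight n k g = 2 * k := by
  have hset : ({g ∈ Ico 1 n | g ≤ k ∨ n - k ≤ g} : Finset ℕ) = Ico 1 (k + 1) ∪ Ico (n - k) n := by
    ext g; simp only [mem_filter, mem_union, mem_Ico]; omega
  have hdisj : Disjoint (Ico 1 (k + 1)) (Ico (n - k) n) := by
    rw [disjoint_left]; simp only [mem_Ico]; omega
  simp only [critWeight]
  rw [sum_boole, hset, card_union_of_disjoint hdisj, Nat.card_Ico, Nat.card_Ico]
  omega

theorem sum_Ico_critWeight_reverse {n k p : ℕ} (hpn : p ≤ n) (hp1 : 1 ≤ p) (hkn : 2 * k < n) :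
    ∑ g ∈ Ico 1 p, critWeight n k g + ∑ g ∈ Ico 1 (n + 1 - p), critWeight n k g = 2 * k := by
  have hreflect : ∑ g ∈ Ico 1 p, critWeight n k g = ∑ g ∈ Ico (n + 1 - p) n, critWeight n k g := by
    refine (sum_congr rfl fun g hg ↦ ?_).trans (sum_Ico_reflect (critWeight n k) 1 (by omega))
    have := mem_Ico.1 hg
    exact if_congr (by omega) rfl rfl
  rw [hreflect, add_comm, sum_Ico_consecutive _ (by omega) (by omega), sum_Ico_critWeight hkn]

theorem NLe_eq_sum_critWeight {n : ℕ} [NeZero n] (hp : HalfPeriod n) (k : ℕ) :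
    (hp.NLe k : ℤ) = ∑ t ∈ range (steps n), critWeight n k (hp.gate t) := by
  have hset : {t | t < steps n ∧ hp.LeCritical t k} =
      ({t ∈ range (steps n) | hp.gate t ≤ k ∨ n - k ≤ hp.gate t} : Finset ℕ) := by
    ext t
    simp only [Set.mem_ofPred_eq, coe_filter, mem_range, and_congr_right_iff]
    intro ht
    have hgate := mem_Ico.1 (hp.gate_mem_Ico ht)
    simp only [LeCritical, Critical, hp.gateAt_iff ht]
    constructor
    · rintro ⟨i, -, hik, h | h⟩ <;> omega
    · rintro (h | h)
      · exact ⟨hp.gate t, hgate.1, h, .inl rfl⟩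
      · exact ⟨n - hp.gate t, by omega, by omega, .inr (by omega)⟩
  rw [NLe, hset, Set.ncard_coe_finset]
  simp only [critWeight, sum_boole]

/-- The number of `(≤ k)`-critical transpositions among the steps in `s`. -/
noncomputable def critCount {n : ℕ} [NeZero n] (hp : HalfPeriod n) (k : ℕ) (s : Finset ℕ) : ℤ :=
  ∑ t ∈ s, critWeight n k (hp.gate t)

theorem critCount_nonneg {n : ℕ} [NeZero n] (hp : HalfPeriod n) (k : ℕ) (s : Finset ℕ) :
    0 ≤ hp.critCount k s :=
  sum_nonneg fun _ _ ↦ critWeight_nonneg _ _ _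

theorem critCount_le_card {n : ℕ} [NeZero n] (hp : HalfPeriod n) (k : ℕ) (s : Finset ℕ) :
    hp.critCount k s ≤ #s := by
  simpa [critCount] using sum_le_card_nsmul s (fun t ↦ critWeight n k (hp.gate t)) 1
    fun _ _ ↦ critWeight_le_one _ _ _

theorem not_critical_of_critCount_le_zero {n : ℕ} [NeZero n] {hp : HalfPeriod n} {k : ℕ}
    {s : Finset ℕ} (h : hp.critCount k s ≤ 0) {t : ℕ} (ht : t ∈ s) :
    k < hp.gate t ∧ hp.gate t < n - k := by
  have hzero := (sum_eq_zero_iff_of_nonneg fun _ _ ↦ critWeight_nonneg _ _ _).1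
    (h.antisymm (hp.critCount_nonneg k s)) t ht
  have : ¬ (hp.gate t ≤ k ∨ n - k ≤ hp.gate t) := fun hcrit ↦ by
    rw [critWeight_eq_one_iff.2 hcrit] at hzero
    exact one_ne_zero hzero
  omega

end CriticalWeight

/-! ### Monochromatic and bichromatic swaps -/

/-- A partition of the elements into classes of `m` elements each, in which every class `i` has a
time `front i` at which it occupies the first `m` positions, and such that in the circular sequence
read from that time on every swap with another class carries the elements of class `i` upwards.
Before its front time a class therefore moves downwards in such swaps, and after it upwards. -/
structure FrontedPartition {n : ℕ} [NeZero n] (hp : HalfPeriod n) (m : ℕ) (ι : Type*)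
    [DecidableEq ι] where
  cls : Fin n → ι
  front : ι → ℕ
  front_le_steps (i : ι) : front i ≤ steps n
  card_cls (i : ι) : #{x | cls x = i} = m
  pos_front_le (x : Fin n) : hp.pos (front (cls x)) x ≤ m
  front_riser_le (t : ℕ) (ht : t < steps n) (h : cls (hp.riser t) ≠ cls (hp.faller t)) :
    front (cls (hp.riser t)) ≤ t
  lt_front_faller (t : ℕ) (ht : t < steps n) (h : cls (hp.riser t) ≠ cls (hp.faller t)) :
    t < front (cls (hp.faller t))

namespace FrontedPartition

variable {n : ℕ} [NeZero n] {hp : HalfPeriod n} {m : ℕ} {ι : Type*} [DecidableEq ι]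
  (P : FrontedPartition hp m ι) {k : ℕ}

/-- The position of `x` within its class at the front time of the class. -/
def rank (x : Fin n) : ℕ := hp.pos (P.front (P.cls x)) x

/-- The steps that swap two elements of the same class. -/
noncomputable def mono : Finset ℕ :=
  {t ∈ range (steps n) | P.cls (hp.riser t) = P.cls (hp.faller t)}

/-- The steps that swap `x` with an element of another class. -/
noncomputable def bichromatic (x : Fin n) : Finset ℕ :=
  {t ∈ range (steps n) | P.cls (hp.riser t) ≠ P.cls (hp.faller t) ∧
    (hp.riser t = x ∨ hp.faller t = x)}

/-- The element that the monochromatic step `t` moves upwards in the circular sequence read from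
the front time of its class. -/
noncomputable def advancer (t : ℕ) : Fin n :=
  if P.front (P.cls (hp.riser t)) ≤ t then hp.riser t else hp.faller t

/-- The element that the monochromatic step `t` moves downwards in the circular sequence read from
the front time of its class. -/
noncomputable def retreater (t : ℕ) : Fin n :=
  if P.front (P.cls (hp.riser t)) ≤ t then hp.faller t else hp.riser t

/-- The monochromatic steps in which `x` advances. -/
noncomputable def advances (x : Fin n) : Finset ℕ := {t ∈ P.mono | P.advancer t = x}

/-- The monochromatic steps in which `x` retreats. -/
noncomputable def retreats (x : Fin n) : Finset ℕ := {t ∈ P.mono | P.retreater t = x}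

theorem rank_mem_Icc (x : Fin n) : P.rank x ∈ Icc 1 m :=
  mem_Icc.2 ⟨(hp.pos_mem _ (P.front_le_steps _) x).1, P.pos_front_le x⟩

theorem sum_rank [Fintype ι] (f : ℕ → ℤ) :
    ∑ x, f (P.rank x) = Fintype.card ι * ∑ p ∈ Icc 1 m, f p := by
  have hclass (i : ι) : ∑ x with P.cls x = i, f (P.rank x) = ∑ p ∈ Icc 1 m, f p := by
    have hinj : Set.InjOn (hp.pos (P.front i)) ({x | P.cls x = i} : Finset (Fin n)) :=
      (hp.pos_inj _ (P.front_le_steps i)).injOn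
    have hrank : ∀ x ∈ ({x | P.cls x = i} : Finset (Fin n)), P.rank x = hp.pos (P.front i) x :=
      fun x hx ↦ by rw [rank, (mem_filter.1 hx).2]
    have himage : ({x | P.cls x = i} : Finset (Fin n)).image (hp.pos (P.front i)) = Icc 1 m :=
      eq_of_subset_of_card_le (image_subset_iff.2 fun x hx ↦ hrank x hx ▸ P.rank_mem_Icc x)
        (by rw [card_image_of_injOn hinj, P.card_cls, Nat.card_Icc, Nat.add_sub_cancel])
    rw [← himage, sum_image hinj]
    exact sum_congr rfl fun x hx ↦ by rw [hrank x hx]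
  rw [← sum_fiberwise _ P.cls, sum_congr rfl fun i _ ↦ hclass i, sum_const, card_univ,
    nsmul_eq_mul]

theorem netCrossing_of_front_le {t : ℕ} (ht : t < steps n) {x : Fin n}
    (h : P.front (P.cls x) ≤ t) (κ : ℕ → ℤ) :
    hp.netCrossing κ x t =
      (if t ∈ P.advances x then κ (hp.gate t) else 0) +
        (if t ∈ P.bichromatic x then κ (hp.gate t) else 0) -
        if t ∈ P.retreats x then κ (hp.gate t) else 0 := by
  have hne := hp.riser_ne_faller ht
  have hlt := P.lt_front_faller t ht
  simp only [netCrossing, advances, bichromatic, retreats, mono, advancer, retreater, mem_filter,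
    mem_range]
  grind

theorem netCrossing_of_lt_front {t : ℕ} (ht : t < steps n) {x : Fin n}
    (h : t < P.front (P.cls x)) (κ : ℕ → ℤ) :
    hp.netCrossing κ x t =
      -((if t ∈ P.advances x then κ (hp.gate t) else 0) +
        (if t ∈ P.bichromatic x then κ (hp.gate t) else 0) -
        if t ∈ P.retreats x then κ (hp.gate t) else 0) := by
  have hne := hp.riser_ne_faller ht
  have hle := P.front_riser_le t ht
  simp only [netCrossing, advances, bichromatic, retreats, mono, advancer, retreater, mem_filter,
    mem_range]
  grind

theorem critCount_balance (hmk : m ≤ k) (hkn : 2 * k < n) (x : Fin n) :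
    hp.critCount k (P.advances x) + hp.critCount k (P.bichromatic x) -
      hp.critCount k (P.retreats x) = 2 * (k + 1 - P.rank x) := by
  have hindicator {s : Finset ℕ} (hs : s ⊆ range (steps n)) : hp.critCount k s =
      ∑ t ∈ range (steps n), if t ∈ s then critWeight n k (hp.gate t) else 0 := by
    rw [sum_ite_mem, inter_eq_right.2 hs, critCount]
  have hadvances : P.advances x ⊆ range (steps n) :=
    (filter_subset _ _).trans (filter_subset _ _)
  have hretreats : P.retreats x ⊆ range (steps n) :=
    (filter_subset _ _).trans (filter_subset _ _)
  have hbichromatic : P.bichromatic x ⊆ range (steps n) := filter_subset _ _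
  rw [hindicator hadvances, hindicator hbichromatic, hindicator hretreats,
    ← sum_add_distrib, ← sum_sub_distrib,
    range_eq_Ico, ← sum_Ico_consecutive _ (Nat.zero_le _) (P.front_le_steps (P.cls x))]
  have hbefore := hp.sum_netCrossing (Nat.zero_le _) (P.front_le_steps (P.cls x)) (critWeight n k) x
  have hafter := hp.sum_netCrossing (P.front_le_steps (P.cls x)) le_rfl (critWeight n k) x
  rw [sum_congr rfl fun t ht ↦ P.netCrossing_of_lt_front
    ((mem_Ico.1 ht).2.trans_le (P.front_le_steps _)) (mem_Ico.1 ht).2 (critWeight n k),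
    sum_neg_distrib] at hbefore
  rw [sum_congr rfl fun t ht ↦ P.netCrossing_of_front_le (mem_Ico.1 ht).2 (mem_Ico.1 ht).1
    (critWeight n k), hp.pos_steps] at hafter
  have hrank := mem_Icc.1 (P.rank_mem_Icc x)
  have hfront := sum_Ico_critWeight_of_le (n := n) hrank.1 (hrank.2.trans (hmk.trans k.le_succ))
  have hpos := hp.pos_mem 0 (Nat.zero_le _) x
  have hreverse := sum_Ico_critWeight_reverse hpos.2 hpos.1 hkn
  rw [rank] at hfront ⊢
  linarith

theorem sum_critCount_advances : ∑ x, hp.critCount k (P.advances x) = hp.critCount k P.mono :=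
  sum_fiberwise _ _ _

theorem sum_critCount_retreats : ∑ x, hp.critCount k (P.retreats x) = hp.critCount k P.mono :=
  sum_fiberwise _ _ _

theorem critCount_mono_add_sum_bichromatic :
    2 * hp.critCount k P.mono + ∑ x, hp.critCount k (P.bichromatic x) = 2 * hp.NLe k := by
  set bi : Finset ℕ := {t ∈ range (steps n) | ¬ P.cls (hp.riser t) = P.cls (hp.faller t)} with hbi
  have htotal : hp.critCount k P.mono + hp.critCount k bi = hp.NLe k := by
    rw [hp.NLe_eq_sum_critWeight, critCount, critCount, mono, hbi, sum_filter_add_sum_filter_not]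
  have hsplit (x : Fin n) : hp.critCount k (P.bichromatic x) =
      hp.critCount k {t ∈ bi | hp.riser t = x} + hp.critCount k {t ∈ bi | hp.faller t = x} := by
    have hdisj : Disjoint ({t ∈ bi | hp.riser t = x} : Finset ℕ) {t ∈ bi | hp.faller t = x} := by
      rw [disjoint_filter]
      rintro t ht rfl
      exact (hp.riser_ne_faller (mem_range.1 (mem_filter.1 ht).1)).symm
    rw [critCount, critCount, critCount, ← sum_union hdisj, ← filter_or, hbi, filter_filter,
      bichromatic]
  have hsum : ∑ x, hp.critCount k (P.bichromatic x) = hp.critCount k bi + hp.critCount k bi := by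
    rw [sum_congr rfl fun x _ ↦ hsplit x, sum_add_distrib]
    exact congrArg₂ _ (sum_fiberwise _ _ _) (sum_fiberwise _ _ _)
  linarith

theorem NLe_eq_critCount_mono_add [Fintype ι] (hmk : m ≤ k) (hkn : 2 * k < n) :
    (hp.NLe k : ℤ) =
      hp.critCount k P.mono + Fintype.card ι * ∑ p ∈ Icc 1 m, ((k : ℤ) + 1 - p) := by
  have hbalance := sum_congr (rfl : (univ : Finset (Fin n)) = univ)
    fun x _ ↦ P.critCount_balance hmk hkn x
  rw [sum_sub_distrib, sum_add_distrib, sum_critCount_advances, sum_critCount_retreats, ← mul_sum,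
    P.sum_rank fun p ↦ (k : ℤ) + 1 - p] at hbalance
  linarith [P.critCount_mono_add_sum_bichromatic (k := k)]

theorem critCount_bichromatic_le (x : Fin n) : hp.critCount k (P.bichromatic x) ≤ n - m := by
  have hcard : #(P.bichromatic x) ≤ #{y | ¬ P.cls y = P.cls x} := by
    refine hp.card_le_card_of_partner_mem (x := x) fun t ht ↦ ?_
    obtain ⟨hlt, hne, rfl | rfl⟩ := mem_filter.1 ht
    · exact ⟨mem_range.1 hlt, .inl ⟨rfl, by simpa using Ne.symm hne⟩⟩
    · exact ⟨mem_range.1 hlt, .inr ⟨rfl, by simpa using hne⟩⟩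
  have hcompl := card_filter_add_card_filter_not (s := (univ : Finset (Fin n))) (P.cls · = P.cls x)
  rw [P.card_cls, card_univ, Fintype.card_fin] at hcompl
  have := hp.critCount_le_card k (P.bichromatic x)
  omega

theorem max_zero_le_critCount_advances (hmk : m ≤ k) (hkn : 2 * k < n) (x : Fin n) :
    max 0 (2 * ((k : ℤ) + 1 - P.rank x) - (n - m)) ≤ hp.critCount k (P.advances x) := by
  have := P.critCount_balance hmk hkn x
  have := P.critCount_bichromatic_le (k := k) x
  have := hp.critCount_nonneg k (P.retreats x)
  exact max_le (hp.critCount_nonneg k _) (by linarith)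

-- If the lower bounds for the advances add up to the number of monochromatic `(≤ k)`-critical
-- steps, they are all attained, which leaves no room for critical retreats.
theorem critCount_retreats_le_zero [Fintype ι] (hmk : m ≤ k) (hkn : 2 * k < n)
    (hmono : hp.critCount k P.mono ≤
      Fintype.card ι * ∑ p ∈ Icc 1 m, max 0 (2 * ((k : ℤ) + 1 - p) - (n - m)))
    {x : Fin n} (hx : n - m ≤ 2 * ((k : ℤ) + 1 - P.rank x)) :
    hp.critCount k (P.retreats x) ≤ 0 := by
  rw [← sum_critCount_advances, ← P.sum_rank fun p ↦ max 0 (2 * ((k : ℤ) + 1 - p) - (n - m))]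
    at hmono
  have hle := fun x (_ : x ∈ univ) ↦ P.max_zero_le_critCount_advances hmk hkn x
  have heq := (sum_eq_sum_iff_of_le hle).1 ((sum_le_sum hle).antisymm hmono) x (mem_univ x)
  rw [max_eq_right (by linarith)] at heq
  have := P.critCount_balance hmk hkn x
  have := P.critCount_bichromatic_le (k := k) x
  linarith

end FrontedPartition

/-! ### The three classes of a 3-decomposable half-period -/

section Thirds

variable {n : ℕ} (hp : HalfPeriod n) (m : ℕ)

/-- The index of the block of `x` when the initial arrangement is cut after its first `m` and its
first `2 * m` positions: for `n = 3 * m` and a 3-decomposable half-period these are the classes `A`,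
`B` and `C`. -/
def third (x : Fin n) : Fin 3 :=
  if hp.pos 0 x ≤ m then 0 else if hp.pos 0 x ≤ 2 * m then 1 else 2

variable {hp m}

theorem third_eq_zero_iff {x : Fin n} : hp.third m x = 0 ↔ hp.pos 0 x ≤ m := by
  rw [third]; split_ifs <;> simp [*]

theorem third_eq_one_iff {x : Fin n} : hp.third m x = 1 ↔ m < hp.pos 0 x ∧ hp.pos 0 x ≤ 2 * m := by
  rw [third]; split_ifs <;> simp <;> omega

theorem third_eq_two_iff {x : Fin n} : hp.third m x = 2 ↔ 2 * m < hp.pos 0 x := by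
  rw [third]; split_ifs <;> simp <;> omega

theorem third_mono {x y : Fin n} (h : hp.pos 0 x ≤ hp.pos 0 y) :
    hp.third m x ≤ hp.third m y := by
  rw [third, third]; split_ifs <;> first | decide | omega

variable (hp) in
theorem card_third (hn : n = 3 * m) (i : Fin 3) : #{x | hp.third m x = i} = m := by
  have hmem (x : Fin n) := hp.pos_mem 0 (Nat.zero_le _) x
  have hcard (l h : ℕ) (hl : 1 ≤ l) (hh : h ≤ n)
      (hi : ∀ x, hp.third m x = i ↔ l ≤ hp.pos 0 x ∧ hp.pos 0 x ≤ h) :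
      #{x | hp.third m x = i} = h + 1 - l := by
    simp only [hi, ← mem_Icc]
    exact hp.card_filter_pos_zero_mem_Icc hl hh
  match i with
  | 0 =>
    rw [hcard 1 m le_rfl (by omega) fun x ↦ third_eq_zero_iff.trans (by have := hmem x; omega)]
    omega
  | 1 =>
    rw [hcard (m + 1) (2 * m) (by omega) (by omega) fun x ↦ third_eq_one_iff]
    omega
  | 2 =>
    rw [hcard (2 * m + 1) n (by omega) le_rfl fun x ↦
      third_eq_two_iff.trans (by have := hmem x; omega)]
    omega

end Thirds

section MiddleFront

variable {n : ℕ} [NeZero n] (hp : HalfPeriod n) (m : ℕ)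

/-- Every swap between the first and the second third occurs before every swap of the last third
with one of the other two. -/
def MiddleFirst : Prop :=
  ∀ s < steps n, ∀ t < steps n, hp.third m (hp.riser s) = 0 → hp.third m (hp.faller s) = 1 →
    hp.third m (hp.riser t) ≠ 2 → hp.third m (hp.faller t) = 2 → s < t

/-- The end of the last swap between the first and the second third. -/
noncomputable def middleFront : ℕ :=
  {t ∈ range (steps n) | hp.third m (hp.riser t) = 0 ∧ hp.third m (hp.faller t) = 1}.sup (· + 1)

variable {hp m}

theorem middleFront_le_steps : hp.middleFront m ≤ steps n :=
  Finset.sup_le fun _ ht ↦ mem_range.1 (mem_filter.1 ht).1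

theorem lt_middleFront {t : ℕ} (ht : t < steps n) (hr : hp.third m (hp.riser t) = 0)
    (hf : hp.third m (hp.faller t) = 1) : t < hp.middleFront m :=
  le_sup (f := (· + 1)) (mem_filter.2 ⟨mem_range.2 ht, hr, hf⟩)

theorem MiddleFirst.middleFront_le (h : hp.MiddleFirst m) {t : ℕ} (ht : t < steps n)
    (hr : hp.third m (hp.riser t) ≠ 2) (hf : hp.third m (hp.faller t) = 2) :
    hp.middleFront m ≤ t :=
  Finset.sup_le fun s hs ↦
    have hs := mem_filter.1 hs
    h s (mem_range.1 hs.1) t ht hs.2.1 hs.2.2 hr hf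

theorem MiddleFirst.pos_middleFront_lt (h : hp.MiddleFirst m) {x y : Fin n}
    (hx : hp.third m x = 1) (hy : hp.third m y ≠ 1) :
    hp.pos (hp.middleFront m) x < hp.pos (hp.middleFront m) y := by
  have hne : hp.pos 0 x ≠ hp.pos 0 y := (hp.pos_inj 0 (Nat.zero_le _)).ne (by grind)
  rcases hne.lt_or_gt with hlt | hgt
  · obtain ⟨t, ht, rfl, rfl⟩ := hp.exists_swap hlt
    have hle := third_mono (m := m) hlt.le
    exact hp.pos_riser_lt_pos_faller (h.middleFront_le ht (by simp [hx]) (by omega)) ht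
  · obtain ⟨t, ht, rfl, rfl⟩ := hp.exists_swap hgt
    have hle := third_mono (m := m) hgt.le
    exact hp.pos_faller_lt_pos_riser (lt_middleFront ht (by omega) hx) middleFront_le_steps

theorem MiddleFirst.pos_middleFront_le (h : hp.MiddleFirst m) (hn : n = 3 * m) {x : Fin n}
    (hx : hp.third m x = 1) : hp.pos (hp.middleFront m) x ≤ m := by
  have hmem := hp.pos_mem (hp.middleFront m) middleFront_le_steps x
  have hcard := hp.card_filter_pos_mem (t := hp.middleFront m) middleFront_le_steps
    (Icc_subset_Icc_right (a := 1) hmem.2)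
  rw [Nat.card_Icc, Nat.add_sub_cancel] at hcard
  rw [← hcard]
  refine (card_le_card fun y hy ↦ ?_).trans (hp.card_third hn 1).le
  have hyx := (mem_Icc.1 (mem_filter.1 hy).2).2
  by_contra hy'
  exact hyx.not_gt (h.pos_middleFront_lt hx (by simpa using hy'))

/-- The three blocks of `n / 3` elements of a 3-decomposable half-period: the first is in front at
the beginning, the second once it has overtaken the first, and the last at the end. -/
noncomputable def MiddleFirst.frontedPartition (h : hp.MiddleFirst m) (hn : n = 3 * m) :
    FrontedPartition hp m (Fin 3) where
  cls := hp.third m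
  front := ![0, hp.middleFront m, steps n]
  front_le_steps i := by
    match i with
    | 0 => exact Nat.zero_le _
    | 1 => exact middleFront_le_steps
    | 2 => exact le_rfl
  card_cls := hp.card_third hn
  pos_front_le x := by
    match hx : hp.third m x with
    | 0 => exact third_eq_zero_iff.1 hx
    | 1 => exact h.pos_middleFront_le hn hx
    | 2 =>
      have := third_eq_two_iff.1 hx
      refine (hp.pos_steps x).trans_le ?_
      omega
  front_riser_le t ht hne := by
    have hlt := (third_mono (m := m) (hp.pos_zero_riser_lt_pos_zero_faller ht).le).lt_of_ne hne
    match hr : hp.third m (hp.riser t) with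
    | 0 => exact Nat.zero_le _
    | 1 => exact h.middleFront_le ht (by simp [hr]) (by omega)
    | 2 => omega
  lt_front_faller t ht hne := by
    have hlt := (third_mono (m := m) (hp.pos_zero_riser_lt_pos_zero_faller ht).le).lt_of_ne hne
    match hf : hp.third m (hp.faller t) with
    | 0 => omega
    | 1 => exact lt_middleFront ht (by omega) hf
    | 2 => exact ht

end MiddleFront

/-! ### Swaps of an initial block -/

section InitialBlock

variable {n : ℕ} (hp : HalfPeriod n)

/-- The elements in the first `m` positions of the initial arrangement. -/
def initial (m : ℕ) : Finset (Fin n) := {x | hp.pos 0 x ≤ m}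

theorem mem_initial {m : ℕ} {x : Fin n} : x ∈ hp.initial m ↔ hp.pos 0 x ≤ m := by
  simp [initial]

theorem initial_subset_initial {l m : ℕ} (hlm : l ≤ m) : hp.initial l ⊆ hp.initial m :=
  fun _ hx ↦ hp.mem_initial.2 ((hp.mem_initial.1 hx).trans hlm)

theorem card_initial {m : ℕ} (hm : m ≤ n) : #(hp.initial m) = m := by
  have hpos (x : Fin n) := (hp.pos_mem 0 (Nat.zero_le _) x).1
  simpa [initial, hpos, Nat.one_le_iff_ne_zero] using hp.card_filter_pos_zero_mem_Icc le_rfl hm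

theorem image_pos_initial {m τ : ℕ} (hm : m ≤ n) (hτ : τ ≤ steps n) {s : Finset ℕ} (hs : #s ≤ m)
    (h : ∀ x ∈ hp.initial m, hp.pos τ x ∈ s) : (hp.initial m).image (hp.pos τ) = s :=
  eq_of_subset_of_card_le (image_subset_iff.2 h)
    (by rwa [card_image_of_injective _ (hp.pos_inj τ hτ), hp.card_initial hm])

end InitialBlock

section RisesPast

variable {n : ℕ} [NeZero n] (hp : HalfPeriod n)

theorem riser_mem_initial {m t : ℕ} (ht : t < steps n) (h : hp.faller t ∈ hp.initial m) :
    hp.riser t ∈ hp.initial m :=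
  hp.mem_initial.2 ((hp.pos_zero_riser_lt_pos_zero_faller ht).le.trans (hp.mem_initial.1 h))

/-- The `g`-transpositions in which `x` moves from position `g` to position `g + 1`, past one of
the first `m` elements of the initial arrangement. -/
noncomputable def risesPast (g m : ℕ) (x : Fin n) : Finset ℕ :=
  {t ∈ range (steps n) | hp.gate t = g ∧ hp.riser t = x ∧ hp.faller t ∈ hp.initial m}

theorem mem_risesPast {g m t : ℕ} {x : Fin n} : t ∈ hp.risesPast g m x ↔
    t < steps n ∧ hp.gate t = g ∧ hp.riser t = x ∧ hp.faller t ∈ hp.initial m := by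
  simp [risesPast]

theorem sum_card_risesPast (g m : ℕ) : ∑ x ∈ hp.initial m, #(hp.risesPast g m x) =
    #{t ∈ range (steps n) | hp.gate t = g ∧ hp.faller t ∈ hp.initial m} := by
  rw [card_eq_sum_card_fiberwise (f := hp.riser) (t := hp.initial m)]
  · refine sum_congr rfl fun x _ ↦ congrArg card ?_
    ext t
    simp only [mem_risesPast, mem_filter, mem_range]
    tauto
  · intro t ht
    obtain ⟨ht, -, hf⟩ := mem_filter.1 (mem_coe.1 ht)
    exact hp.riser_mem_initial (mem_range.1 ht) hf

theorem card_risesPast_le_pos_zero (g m : ℕ) (x : Fin n) :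
    #(hp.risesPast g m x) ≤ m - hp.pos 0 x := by
  have hsub : #{y | hp.pos 0 y ∈ Ioc (hp.pos 0 x) m} ≤ #(Ioc (hp.pos 0 x) m) :=
    card_le_card_of_injOn (hp.pos 0) (fun y hy ↦ (mem_filter.1 hy).2)
      (hp.pos_inj 0 (Nat.zero_le _)).injOn
  rw [Nat.card_Ioc] at hsub
  refine (hp.card_le_card_of_partner_mem (x := x) fun t ht ↦ ?_).trans hsub
  obtain ⟨hsteps, -, rfl, hf⟩ := hp.mem_risesPast.1 ht
  have hlt := hp.pos_zero_riser_lt_pos_zero_faller hsteps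
  exact ⟨hsteps, .inl ⟨rfl, mem_filter.2 ⟨mem_univ _, mem_Ioc.2 ⟨hlt, hp.mem_initial.1 hf⟩⟩⟩⟩

-- The elements `x` has risen past before time `τ`, and those that fall past `x` afterwards, are
-- below `x` at time `τ`.
theorem card_risesPast_le_card_below {g m τ : ℕ} (hτ : τ ≤ steps n) {x : Fin n}
    (hx : x ∈ hp.initial m) :
    #(hp.risesPast g m x) ≤ #{y ∈ hp.initial m | hp.pos τ y < hp.pos τ x} + 1 := by
  set before := {t ∈ hp.risesPast g m x | t < τ} with hbefore
  set falls := {t ∈ Ico τ (steps n) | hp.gate t = g ∧ hp.faller t = x} with hfalls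
  have hrises : #{t ∈ hp.risesPast g m x | ¬ t < τ} ≤ #falls + 1 := by
    refine (card_le_card fun t ht ↦ ?_).trans (hp.card_rises_le_card_falls_add_one hτ le_rfl g x)
    simp only [mem_filter, mem_risesPast, not_lt, mem_Ico] at ht ⊢
    tauto
  have hbelow : #(before ∪ falls) ≤ #{y ∈ hp.initial m | hp.pos τ y < hp.pos τ x} := by
    refine hp.card_le_card_of_partner_mem (x := x) fun t ht ↦ ?_
    simp only [hbefore, hfalls, mem_union, mem_filter, mem_risesPast, mem_Ico] at ht ⊢
    rcases ht with ⟨⟨ht, -, rfl, hf⟩, hlt⟩ | ⟨⟨hle, ht⟩, -, rfl⟩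
    · exact ⟨ht, .inl ⟨rfl, hf, hp.pos_faller_lt_pos_riser hlt hτ⟩⟩
    · exact ⟨ht, .inr ⟨rfl, hp.riser_mem_initial ht hx, hp.pos_riser_lt_pos_faller hle ht⟩⟩
  have hdisj : Disjoint before falls := by
    rw [disjoint_left]
    intro t hb hf
    have := (mem_filter.1 hb).2
    have := (mem_Ico.1 (mem_filter.1 hf).1).1
    omega
  rw [card_union_of_disjoint hdisj] at hbelow
  have hsplit : #before + #{t ∈ hp.risesPast g m x | ¬ t < τ} = #(hp.risesPast g m x) :=
    card_filter_add_card_filter_not _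
  omega

-- The elements that fall past `x` before time `τ`, and those `x` rises past afterwards, are
-- above `x` at time `τ`.
theorem card_risesPast_le_card_above {g m τ : ℕ} (hτ : τ ≤ steps n) {x : Fin n}
    (hx : x ∈ hp.initial m) :
    #(hp.risesPast g m x) ≤ #{y ∈ hp.initial m | hp.pos τ x < hp.pos τ y} + 1 := by
  set after := {t ∈ hp.risesPast g m x | ¬ t < τ} with hafter
  set falls := {t ∈ Ico 0 τ | hp.gate t = g ∧ hp.faller t = x} with hfalls
  have hrises : #{t ∈ hp.risesPast g m x | t < τ} ≤ #falls + 1 := by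
    refine (card_le_card fun t ht ↦ ?_).trans
      (hp.card_rises_le_card_falls_add_one (Nat.zero_le _) hτ g x)
    simp only [mem_filter, mem_risesPast, mem_Ico, Nat.zero_le, true_and] at ht ⊢
    tauto
  have habove : #(after ∪ falls) ≤ #{y ∈ hp.initial m | hp.pos τ x < hp.pos τ y} := by
    refine hp.card_le_card_of_partner_mem (x := x) fun t ht ↦ ?_
    simp only [hafter, hfalls, mem_union, mem_filter, mem_risesPast, mem_Ico, not_lt] at ht ⊢
    rcases ht with ⟨⟨ht, -, rfl, hf⟩, hle⟩ | ⟨⟨-, hlt⟩, -, rfl⟩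
    · exact ⟨ht, .inl ⟨rfl, hf, hp.pos_riser_lt_pos_faller hle ht⟩⟩
    · have ht := hlt.trans_le hτ
      exact ⟨ht, .inr ⟨rfl, hp.riser_mem_initial ht hx, hp.pos_faller_lt_pos_riser hlt hτ⟩⟩
  have hdisj : Disjoint after falls := by
    rw [disjoint_left]
    intro t ha hf
    have := (mem_filter.1 ha).2
    have := (mem_Ico.1 (mem_filter.1 hf).1).2
    omega
  rw [card_union_of_disjoint hdisj] at habove
  have hsplit : #{t ∈ hp.risesPast g m x | t < τ} + #after = #(hp.risesPast g m x) :=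
    card_filter_add_card_filter_not _
  omega

theorem card_risesPast_le_of_image_eq {g m τ l h : ℕ} (hτ : τ ≤ steps n)
    (himage : (hp.initial m).image (hp.pos τ) = Icc l h) {x : Fin n} (hx : x ∈ hp.initial m) :
    #(hp.risesPast g m x) ≤ min (hp.pos τ x - l + 1) (h + 1 - hp.pos τ x) := by
  have hmem : ∀ y ∈ hp.initial m, hp.pos τ y ∈ Icc l h :=
    fun y hy ↦ himage ▸ mem_image_of_mem _ hy
  have hinj (s : Finset (Fin n)) : Set.InjOn (hp.pos τ) s := (hp.pos_inj τ hτ).injOn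
  have hbelow : #{y ∈ hp.initial m | hp.pos τ y < hp.pos τ x} ≤ #(Ico l (hp.pos τ x)) :=
    card_le_card_of_injOn (hp.pos τ) (fun y hy ↦ by
      have hy := mem_filter.1 (mem_coe.1 hy)
      exact mem_coe.2 (mem_Ico.2 ⟨(mem_Icc.1 (hmem y hy.1)).1, hy.2⟩)) (hinj _)
  have habove : #{y ∈ hp.initial m | hp.pos τ x < hp.pos τ y} ≤ #(Ioc (hp.pos τ x) h) :=
    card_le_card_of_injOn (hp.pos τ) (fun y hy ↦ by
      have hy := mem_filter.1 (mem_coe.1 hy)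
      exact mem_coe.2 (mem_Ioc.2 ⟨hy.2, (mem_Icc.1 (hmem y hy.1)).2⟩)) (hinj _)
  have hle := (mem_Icc.1 (hmem x hx)).2
  have := hp.card_risesPast_le_card_below (g := g) hτ hx
  have := hp.card_risesPast_le_card_above (g := g) hτ hx
  rw [Nat.card_Ico] at hbelow
  rw [Nat.card_Ioc] at habove
  omega

end RisesPast

section Falls

variable {n : ℕ} [NeZero n] (hp : HalfPeriod n)

theorem card_rises_le_one {z : Fin n} (hz : hp.pos 0 z = 1) (g : ℕ) :
    #{t ∈ range (steps n) | hp.gate t = g ∧ hp.riser t = z} ≤ 1 := by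
  have hfalls : ({t ∈ range (steps n) | hp.gate t = g ∧ hp.faller t = z} : Finset ℕ) = ∅ := by
    refine filter_eq_empty_iff.2 fun t ht ⟨_, hf⟩ ↦ ?_
    have hlt := hp.pos_zero_riser_lt_pos_zero_faller (mem_range.1 ht)
    have := (hp.pos_mem 0 (Nat.zero_le _) (hp.riser t)).1
    rw [hf] at hlt
    omega
  have hle := hp.card_rises_le_card_falls_add_one (Nat.zero_le _) le_rfl g z
  rwa [← range_eq_Ico, hfalls, card_empty] at hle

theorem card_falls_le {u : ℕ} (hu : 1 ≤ u) (hun : u ≤ n) (g : ℕ) :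
    #{t ∈ range (steps n) | hp.gate t = g ∧ hp.faller t ∈ hp.initial u} ≤
      (u - 1).choose 2 + 1 := by
  obtain ⟨z, -, hz⟩ := mem_image.1
    ((hp.image_pos (Nat.zero_le _)).ge (mem_Icc.2 ⟨le_rfl, hu.trans hun⟩))
  set s : Finset (Fin n) := {x | hp.pos 0 x ∈ Icc 2 u}
  have hpairs : #{t ∈ range (steps n) | hp.riser t ∈ s ∧ hp.faller t ∈ s} ≤ (u - 1).choose 2 := by
    have hcard := card_filter_lt_of_injOn (hp.pos_inj 0 (Nat.zero_le _)).injOn (s := s)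
    rw [hp.card_filter_pos_zero_mem_Icc one_le_two hun] at hcard
    refine hcard ▸ card_le_card_of_injOn (fun t ↦ (hp.riser t, hp.faller t)) (fun t ht ↦ ?_)
      (hp.image_riser_faller.2.mono (filter_subset _ _))
    obtain ⟨ht, hr, hf⟩ := mem_filter.1 (mem_coe.1 ht)
    exact mem_coe.2 (mem_filter.2
      ⟨mk_mem_product hr hf, hp.pos_zero_riser_lt_pos_zero_faller (mem_range.1 ht)⟩)
  refine (card_le_card fun t ht ↦ ?_).trans
    ((card_union_le _ _).trans (add_le_add hpairs (hp.card_rises_le_one hz g)))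
  obtain ⟨ht, hg, hf⟩ := mem_filter.1 ht
  have hlt := hp.pos_zero_riser_lt_pos_zero_faller (mem_range.1 ht)
  have hpos := (hp.pos_mem 0 (Nat.zero_le _) (hp.riser t)).1
  have hfu := hp.mem_initial.1 hf
  by_cases hr : hp.pos 0 (hp.riser t) = 1
  · have : hp.riser t = z := hp.pos_inj 0 (Nat.zero_le _) (hr.trans hz.symm)
    exact mem_union_right _ (mem_filter.2 ⟨ht, hg, this⟩)
  · refine mem_union_left _ (mem_filter.2 ⟨ht, ?_, ?_⟩) <;>
      exact mem_filter.2 ⟨mem_univ _, mem_Icc.2 (by omega)⟩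

theorem sum_card_risesPast_le {u m : ℕ} (hu : 1 ≤ u) (hun : u ≤ n) (g : ℕ) :
    ∑ x ∈ hp.initial u, #(hp.risesPast g m x) ≤ u + (u - 1).choose 2 + 1 := by
  have hle (x : Fin n) : #(hp.risesPast g m x) ≤
      #{t ∈ range (steps n) | hp.gate t = g ∧ hp.faller t = x} + 1 := by
    rw [range_eq_Ico]
    refine (card_le_card fun t ht ↦ ?_).trans
      (hp.card_rises_le_card_falls_add_one (Nat.zero_le _) le_rfl g x)
    simp only [mem_risesPast, mem_filter, mem_Ico, Nat.zero_le, true_and] at ht ⊢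
    tauto
  have hfalls : ∑ x ∈ hp.initial u, #{t ∈ range (steps n) | hp.gate t = g ∧ hp.faller t = x} =
      #{t ∈ range (steps n) | hp.gate t = g ∧ hp.faller t ∈ hp.initial u} := by
    rw [card_eq_sum_card_fiberwise (f := hp.faller) (t := hp.initial u)
      fun t ht ↦ (mem_filter.1 (mem_coe.1 ht)).2.2]
    refine sum_congr rfl fun x hx ↦ congrArg card ?_
    ext t
    simp only [mem_filter]
    grind
  have hsum := sum_le_sum fun x (_ : x ∈ hp.initial u) ↦ hle x
  rw [sum_add_distrib, hfalls, sum_const, hp.card_initial hun, smul_eq_mul, mul_one] at hsum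
  have := hp.card_falls_le hu hun g
  omega

theorem card_falls_le_sum_sdiff_add {u m : ℕ} (hu : 1 ≤ u) (hum : u ≤ m) (hun : u ≤ n) (g : ℕ) :
    #{t ∈ range (steps n) | hp.gate t = g ∧ hp.faller t ∈ hp.initial m} ≤
      ∑ x ∈ hp.initial m \ hp.initial u, #(hp.risesPast g m x) + (u + (u - 1).choose 2 + 1) := by
  rw [← hp.sum_card_risesPast, ← sum_sdiff (hp.initial_subset_initial hum)]
  exact Nat.add_le_add_left (hp.sum_card_risesPast_le hu hun g) _

variable {hp}

theorem le_pos_of_gate_ne {l s e : ℕ} {x : Fin n}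
    (hfall : ∀ t < steps n, hp.faller t = x → hp.gate t + 1 ≠ l) (hse : s ≤ e) (he : e ≤ steps n)
    (hs : l ≤ hp.pos s x) : l ≤ hp.pos e x := by
  induction e, hse using Nat.le_induction with
  | base => exact hs
  | succ e _ ih =>
    have ih := ih (Nat.le_of_succ_le he)
    have := hfall e he
    rcases hp.step_cases he x with h | h | h
    · omega
    · have := this h.1.symm
      omega
    · omega

/-- All swaps moving an element of `s` downwards are `i`-transpositions with `l ≤ i ≤ h`. -/
def FallsIn (hp : HalfPeriod n) (s : Finset (Fin n)) (l h : ℕ) : Prop :=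
  ∀ t < steps n, hp.faller t ∈ s → hp.gate t ∈ Icc l h

-- Depending on whether `x` has already been swapped with the element `z` preceding it, it has
-- either fallen into the gates `l, …, h` before or is bound to do so later.
theorem FallsIn.pos_mem_Icc {s : Finset (Fin n)} {l h : ℕ} (hfall : hp.FallsIn s l h) {τ : ℕ}
    (hτ : τ ≤ steps n) {x z : Fin n} (hx : x ∈ s) (hzx : hp.pos 0 z ≤ hp.pos 0 x)
    (hz : hp.pos τ z ∈ Icc l (h + 1)) : hp.pos τ x ∈ Icc l (h + 1) := by
  rcases hzx.eq_or_lt with heq | hlt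
  · rwa [← hp.pos_inj 0 (Nat.zero_le _) heq]
  obtain ⟨t, ht, rfl, rfl⟩ := hp.exists_swap hlt
  have hgate := mem_Icc.1 (hfall t ht hx)
  have hz := mem_Icc.1 hz
  have hfall (t' : ℕ) (ht' : t' < steps n) (h : hp.faller t' = hp.faller t) :=
    mem_Icc.1 (hfall t' ht' (h ▸ hx))
  rcases le_or_gt τ t with hle | hgt
  · have hlow := hp.pos_riser_lt_pos_faller hle ht
    refine mem_Icc.2 ⟨by omega, ?_⟩
    by_contra! hhigh
    have := le_pos_of_gate_ne (l := h + 2) (fun t' ht' h' ↦ by have := hfall t' ht' h'; omega)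
      hle ht.le hhigh
    rw [hp.pos_faller ht] at this
    omega
  · have hhigh := hp.pos_faller_lt_pos_riser hgt hτ
    refine mem_Icc.2 ⟨?_, by omega⟩
    exact le_pos_of_gate_ne (fun t' ht' h' ↦ by have := hfall t' ht' h'; omega) hgt hτ
      (by rw [hp.pos_succ_faller ht]; exact hgate.1)

end Falls

section FallsInCenter

variable {n : ℕ} [NeZero n] {hp : HalfPeriod n} {m : ℕ}

theorem MiddleFirst.fallsIn_of_critCount_retreats (h : hp.MiddleFirst m) (hn : n = 3 * m)
    {u k : ℕ} (hum : u ≤ m)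
    (hretreats : ∀ x ∈ hp.initial u, hp.critCount k ((h.frontedPartition hn).retreats x) ≤ 0) :
    hp.FallsIn (hp.initial u) (k + 1) (n - k - 1) := by
  intro t ht hf
  have hthird {x : Fin n} (hx : x ∈ hp.initial u) : hp.third m x = 0 :=
    third_eq_zero_iff.2 ((hp.mem_initial.1 hx).trans hum)
  have hr0 := hthird (hp.riser_mem_initial ht hf)
  have hmono : t ∈ (h.frontedPartition hn).mono :=
    mem_filter.2 ⟨mem_range.2 ht, hr0.trans (hthird hf).symm⟩
  have hfront : (h.frontedPartition hn).front (hp.third m (hp.riser t)) ≤ t := by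
    rw [hr0]
    exact Nat.zero_le t
  have := not_critical_of_critCount_le_zero (hretreats _ hf) (mem_filter.2 ⟨hmono, if_pos hfront⟩)
  exact mem_Icc.2 (by omega)

theorem MiddleFirst.fallsIn_initial (h : hp.MiddleFirst m) (hn : n = 3 * m) {k : ℕ} (hmk : m ≤ k)
    (hkn : 2 * k < n) (hNLe : (hp.NLe k : ℤ) ≤ 3 * ∑ p ∈ Icc 1 m, ((k : ℤ) + 1 - p)) :
    hp.FallsIn (hp.initial m) (k + 1) (n - k - 1) := by
  set P := h.frontedPartition hn
  have hcount := P.NLe_eq_critCount_mono_add hmk hkn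
  rw [Fintype.card_fin] at hcount
  refine h.fallsIn_of_critCount_retreats hn le_rfl fun x _ ↦ ?_
  have hle : hp.critCount k (P.retreats x) ≤ hp.critCount k P.mono :=
    sum_le_sum_of_subset_of_nonneg (filter_subset _ _) fun _ _ _ ↦ critWeight_nonneg _ _ _
  push_cast at hcount
  linarith

theorem MiddleFirst.fallsIn_initial_of_le (h : hp.MiddleFirst m) (hn : n = 3 * m) {k : ℕ}
    (hmk : m ≤ k) (hkn : 2 * k < n)
    (hNLe : (hp.NLe k : ℤ) ≤
      3 * ∑ p ∈ Icc 1 m, ((k : ℤ) + 1 - p + max 0 (2 * ((k : ℤ) + 1 - p) - (n - m))))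
    {u : ℕ} (hum : u ≤ m) (hu : (n : ℤ) - m ≤ 2 * (k + 1 - u)) :
    hp.FallsIn (hp.initial u) (k + 1) (n - k - 1) := by
  set P := h.frontedPartition hn
  have hcount := P.NLe_eq_critCount_mono_add hmk hkn
  rw [sum_add_distrib] at hNLe
  rw [Fintype.card_fin] at hcount
  push_cast at hcount
  refine h.fallsIn_of_critCount_retreats hn hum fun x hx ↦
    P.critCount_retreats_le_zero hmk hkn (by rw [Fintype.card_fin]; push_cast; linarith) ?_
  have hxu := hp.mem_initial.1 hx
  have hrank : P.rank x = hp.pos 0 x := by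
    have hthird : P.cls x = 0 := third_eq_zero_iff.2 (hxu.trans hum)
    rw [FrontedPartition.rank, hthird]
    rfl
  rw [hrank]
  omega

end FallsInCenter

section Boundary

variable {n : ℕ} [NeZero n] {hp : HalfPeriod n}

-- When the first element of the initial arrangement is at position 14, the first ten elements
-- occupy the positions 11, …, 20 and the first four the positions 14, …, 17. The other six then
-- rise through gate 15 at most 1 + 2 + 3 + 3 + 2 + 1 = 12 times, and the first four at most
-- 8 times in all. As the elements starting at positions 9 and 10 rise past at most 1 and 0
-- elements, a total of 19 is possible only if both of them are counted with weight 1.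
theorem pos_eq_boundary (hn : 10 ≤ n) (hfall10 : hp.FallsIn (hp.initial 10) 11 19)
    (hfall4 : hp.FallsIn (hp.initial 4) 14 16)
    (h19 : 19 ≤ #{t ∈ range (steps n) | hp.gate t = 15 ∧ hp.faller t ∈ hp.initial 10})
    {τ : ℕ} (hτ : τ ≤ steps n) {x y z : Fin n} (hx : hp.pos 0 x = 10) (hy : hp.pos 0 y = 9)
    (hz : hp.pos 0 z = 1) (hzτ : hp.pos τ z = 14) :
    (hp.pos τ x = 11 ∧ hp.pos τ y = 20) ∨ (hp.pos τ y = 11 ∧ hp.pos τ x = 20) := by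
  have hzle (w : Fin n) : hp.pos 0 z ≤ hp.pos 0 w := hz ▸ (hp.pos_mem 0 (Nat.zero_le _) w).1
  have himage10 : (hp.initial 10).image (hp.pos τ) = Icc 11 20 :=
    hp.image_pos_initial hn hτ (by simp) fun w hw ↦
      hfall10.pos_mem_Icc hτ hw (hzle w) (by simp [hzτ])
  have himage4 : (hp.initial 4).image (hp.pos τ) = Icc 14 17 :=
    hp.image_pos_initial (by omega) hτ (by simp) fun w hw ↦
      hfall4.pos_mem_Icc hτ hw (hzle w) (by simp [hzτ])
  set outer := hp.initial 10 \ hp.initial 4 with houter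
  set weight : ℕ → ℕ := fun p ↦ min (p - 11 + 1) (20 + 1 - p) with hweight
  have hrises : ∀ w ∈ outer, #(hp.risesPast 15 10 w) ≤ weight (hp.pos τ w) := fun w hw ↦
    hp.card_risesPast_le_of_image_eq hτ himage10 (mem_sdiff.1 hw).1
  have hsum : ∑ w ∈ outer, weight (hp.pos τ w) = 12 := by
    rw [← sum_image (f := weight) (hp.pos_inj τ hτ).injOn, houter,
      image_sdiff _ _ (hp.pos_inj τ hτ), himage10, himage4]
    rfl
  have htotal : 19 ≤ ∑ w ∈ outer, #(hp.risesPast 15 10 w) + 8 :=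
    h19.trans (hp.card_falls_le_sum_sdiff_add (by norm_num) (by norm_num) (by omega) 15)
  have hxy : x ≠ y := fun h ↦ by rw [h] at hx; omega
  have hxo : x ∈ outer := mem_sdiff.2 (by simp only [mem_initial]; omega)
  have hyo : y ∈ outer := mem_sdiff.2 (by simp only [mem_initial]; omega)
  have hxyle := sum_add_pair_le_sum_add_pair hrises hxo hyo hxy
  have hrx := hp.card_risesPast_le_pos_zero 15 10 x
  have hry := hp.card_risesPast_le_pos_zero 15 10 y
  have hmem {w : Fin n} (hw : w ∈ hp.initial 10) : 11 ≤ hp.pos τ w ∧ hp.pos τ w ≤ 20 :=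
    mem_Icc.1 (himage10 ▸ mem_image_of_mem _ hw)
  have hxτ := hmem (hp.mem_initial.2 hx.le)
  have hyτ := hmem (hp.mem_initial.2 (by omega : hp.pos 0 y ≤ 10))
  have hne : hp.pos τ x ≠ hp.pos τ y := (hp.pos_inj τ hτ).ne hxy
  simp only [hweight] at hsum hxyle
  omega

end Boundary

end HalfPeriod

/-! ### Labelled half-periods -/

section Labels

open Finset HalfPeriod

variable {hp : HalfPeriod 30} {a b c : Fin 10 → Fin 30}

theorem EntersCenterAt.pos_succ {k t : ℕ} {x : Fin 30} (h : EntersCenterAt hp k x t)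
    (hx : hp.pos 0 x ≤ k) : hp.pos (t + 1) x = k + 1 := by
  obtain ⟨ht, hin, -, hfirst⟩ := h
  have hbelow : ∀ s ≤ t, hp.pos s x ≤ k := by
    intro s hs
    induction s with
    | zero => exact hx
    | succ s ih =>
      have := ih (by omega)
      have := hfirst s hs
      unfold InCenter at this hin
      rcases hp.step_cases (by omega : s < steps 30) x with h | h | h <;> omega
  have := hbelow t le_rfl
  unfold InCenter at hin
  rcases hp.step_cases ht x with h | h | h <;> omega

theorem N15Mono_le_card (ha : ∀ i, hp.pos 0 (a i) ≤ 10) : N15Mono hp a ≤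
    #{t ∈ range (steps 30) | hp.gate t = 15 ∧ hp.faller t ∈ hp.initial 10} := by
  rw [N15Mono, ← Set.ncard_coe_finset]
  refine Set.ncard_le_ncard ?_ (finite_toSet _)
  rintro t ⟨ht, hg, i, j, hswap⟩
  refine mem_coe.2 (mem_filter.2 ⟨mem_range.2 ht, (hp.gateAt_iff ht).1 hg, ?_⟩)
  rw [hp.mem_initial]
  rcases (hp.swapsAt_iff ht).1 hswap with ⟨-, hf⟩ | ⟨hf, -⟩ <;> exact hf ▸ ha _

theorem exists_eq_of_pos_zero {f : Fin 10 → Fin 30} {x : Fin 30} (i : ℕ) (hi : i < 10)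
    (h : hp.pos 0 x = hp.pos 0 (f ⟨i, hi⟩)) : ∃ j, x = f j :=
  ⟨_, hp.pos_inj 0 (Nat.zero_le _) h⟩

theorem middleFirst_of_labels (ha : ∀ i : Fin 10, hp.pos 0 (a i) = 10 - (i : ℕ))
    (hb : ∀ i : Fin 10, hp.pos 0 (b i) = 11 + (i : ℕ))
    (hc : ∀ i : Fin 10, hp.pos 0 (c i) = 21 + (i : ℕ))
    (hAB : ∀ s t, s < steps 30 → t < steps 30 → (∃ i j, hp.SwapsAt s (a i) (b j)) →
      (∃ i x, ((∃ j, x = a j) ∨ (∃ j, x = b j)) ∧ hp.SwapsAt t (c i) x) → s < t) :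
    hp.MiddleFirst 10 := by
  have hpos (x : Fin 30) := hp.pos_mem 0 (Nat.zero_le _) x
  have hA {x : Fin 30} (hx : hp.third 10 x = 0) : ∃ i, x = a i := by
    have := third_eq_zero_iff.1 hx
    have := hpos x
    exact exists_eq_of_pos_zero (10 - hp.pos 0 x) (by omega) (by rw [ha, Fin.val_mk]; omega)
  have hB {x : Fin 30} (hx : hp.third 10 x = 1) : ∃ i, x = b i := by
    have := third_eq_one_iff.1 hx
    exact exists_eq_of_pos_zero (hp.pos 0 x - 11) (by omega) (by rw [hb, Fin.val_mk]; omega)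
  have hC {x : Fin 30} (hx : hp.third 10 x = 2) : ∃ i, x = c i := by
    have := third_eq_two_iff.1 hx
    have := hpos x
    exact exists_eq_of_pos_zero (hp.pos 0 x - 21) (by omega) (by rw [hc, Fin.val_mk]; omega)
  intro s hs t ht hrs hfs hrt hft
  obtain ⟨i, hi⟩ := hA hrs
  obtain ⟨j, hj⟩ := hB hfs
  obtain ⟨l, hl⟩ := hC hft
  have hriser : (∃ j, hp.riser t = a j) ∨ (∃ j, hp.riser t = b j) := by
    by_cases h0 : hp.third 10 (hp.riser t) = 0
    · exact .inl (hA h0)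
    · exact .inr (hB (by omega))
  exact hAB s t hs ht ⟨i, j, (hp.swapsAt_iff hs).2 (.inl ⟨hi.symm, hj.symm⟩)⟩
    ⟨l, _, hriser, (hp.swapsAt_iff ht).2 (.inr ⟨hl.symm, rfl⟩)⟩

theorem a1_a2_at_boundary_general (hp : HalfPeriod 30) (a b c : Fin 10 → Fin 30)
    (ha : ∀ i : Fin 10, hp.pos 0 (a i) = 10 - (i : ℕ))
    (hb : ∀ i : Fin 10, hp.pos 0 (b i) = 11 + (i : ℕ))
    (hc : ∀ i : Fin 10, hp.pos 0 (c i) = 21 + (i : ℕ))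
    (hAB : ∀ s t, s < steps 30 → t < steps 30 → (∃ i j, hp.SwapsAt s (a i) (b j)) →
      (∃ i x, ((∃ j, x = a j) ∨ (∃ j, x = b j)) ∧ hp.SwapsAt t (c i) x) → s < t)
    (hN10 : hp.NLe 10 ≤ 165) (hN13 : hp.NLe 13 ≤ 291) (h19 : 19 ≤ N15Mono hp a)
    (t : ℕ) (ht : EntersCenterAt hp 13 (a 9) t) :
    (hp.pos (t + 1) (a 0) = 11 ∧ hp.pos (t + 1) (a 1) = 20) ∨
    (hp.pos (t + 1) (a 1) = 11 ∧ hp.pos (t + 1) (a 0) = 20) := by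
  have h := middleFirst_of_labels ha hb hc hAB
  have hfall10 : hp.FallsIn (hp.initial 10) 11 19 := by
    refine h.fallsIn_initial rfl le_rfl (by norm_num) ?_
    exact (Nat.cast_le.2 hN10).trans (by decide)
  have hfall4 : hp.FallsIn (hp.initial 4) 14 16 := by
    refine h.fallsIn_initial_of_le rfl (by norm_num) (by norm_num) ?_ (by norm_num) (by norm_num)
    exact (Nat.cast_le.2 hN13).trans (by decide)
  have h14 : hp.pos (t + 1) (a 9) = 14 := ht.pos_succ (by rw [ha]; decide)
  have hpairs := h19.trans (N15Mono_le_card fun i ↦ (ha i).trans_le (Nat.sub_le _ _))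
  exact pos_eq_boundary (by norm_num) hfall10 hfall4 hpairs ht.1 (ha 0) (ha 1) (ha 9) h14

end Labels

/-- If `N_15^{aa}(Π) = 19`, then in the arrangement of `Π` immediately
after the swap in which `a_10` enters the 13-center, the elements occupying positions
`11` and `20` are `a_1` and `a_2`, in one of the two possible orders. -/
theorem a1_a2_at_boundary (hp : HalfPeriod 30) (a b c : Fin 10 → Fin 30)
    (h3 : IsThreeDecompLabeling30 hp a b c)
    (hN1 : ∀ k : ℕ, 1 ≤ k → k ≤ 10 → hp.NLe k = 3 * Nat.choose (k + 1) 2)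
    (hN2 : ∀ k : ℕ, 11 ≤ k → k ≤ 13 →
      hp.NLe k = 3 * Nat.choose (k + 1) 2 + 3 * Nat.choose (k - 9) 2)
    (h19 : N15Mono hp a = 19)
    (t : ℕ) (ht : EntersCenterAt hp 13 (a 9) t) :
    (hp.pos (t + 1) (a 0) = 11 ∧ hp.pos (t + 1) (a 1) = 20) ∨
    (hp.pos (t + 1) (a 1) = 11 ∧ hp.pos (t + 1) (a 0) = 20) :=
  have ⟨_, ha, hb, hc, hAB, _⟩ := h3
  a1_a2_at_boundary_general hp a b c ha hb hc hAB (hN1 10 (by decide) le_rfl).le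
    (hN2 13 (by decide) le_rfl).le h19.ge t ht
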